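/- arXiv:2512.15578 — 8 statements merged into one kernel-verified Lean document; each statement's English description precedes it below -/
import Mathlib

section
/- For every natural number n and all real numbers x and c, one has Σ_{k=0}^{n} (1/(k!·(k+1)!)) · ∏_{q=0}^{k−1} (x + q(q+1) − c) = (1/(n!·(n+1)!)) · ∏_{q=1}^{n} (x + q(q+1) − c), where empty products equal 1. -/
/-!
With `f q = x + q(q+1) - c`, the factor `(q+1)(q+2)` of `n!(n+1)! = ∏_{q<n} (q+1)(q+2)` is the
difference `f (q+1) - f 0`. This makes the sum telescope for an arbitrary sequence `f`: adding the
term of index `n + 1` multiplies the partial sum by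
`1 + f 0 / (f (n+1) - f 0) = f (n+1) / (f (n+1) - f 0)`.
-/

open Finset

theorem sum_prod_range_div_prod_sub_apply_zero {K : Type*} [Field K] (f : ℕ → K) (n : ℕ)
    (hf : ∀ q < n, f (q + 1) ≠ f 0) :
    ∑ k ∈ range (n + 1), (∏ q ∈ range k, f q) / ∏ q ∈ range k, (f (q + 1) - f 0) =
      (∏ q ∈ range n, f (q + 1)) / ∏ q ∈ range n, (f (q + 1) - f 0) := by
  induction n with
  | zero => simp
  | succ n ih =>
    have hd : f (n + 1) - f 0 ≠ 0 := sub_ne_zero.mpr (hf n n.lt_succ_self)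
    rw [sum_range_succ, ih fun q hq => hf q (hq.trans n.lt_succ_self), prod_range_succ' f,
      prod_range_succ (fun q => f (q + 1) - f 0), prod_range_succ (fun q => f (q + 1))]
    set P := ∏ q ∈ range n, f (q + 1)
    set D := ∏ q ∈ range n, (f (q + 1) - f 0)
    calc P / D + P * f 0 / (D * (f (n + 1) - f 0))
      _ = (P * (f (n + 1) - f 0) + P * f 0) / (D * (f (n + 1) - f 0)) := by
        rw [add_div, mul_div_mul_right _ _ hd]
      _ = P * f (n + 1) / (D * (f (n + 1) - f 0)) := by rw [← mul_add, sub_add_cancel]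

theorem prod_range_add_one_mul_add_two (n : ℕ) :
    ∏ q ∈ range n, (q + 1) * (q + 2) = n.factorial * (n + 1).factorial := by
  rw [prod_mul_distrib, prod_range_add_one_eq_factorial, ← prod_range_add_one_eq_factorial (n + 1),
    prod_range_succ', zero_add, mul_one]

theorem stmt1_general {K : Type*} [Field K] [CharZero K] (n : ℕ) (x c : K) :
    (∑ k ∈ range (n + 1),
        (1 / ((k.factorial : K) * ((k + 1).factorial : K))) *
          ∏ q ∈ range k, (x + (q : K) * ((q : K) + 1) - c)) =
      (1 / ((n.factorial : K) * ((n + 1).factorial : K))) *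
        ∏ q ∈ Icc 1 n, (x + (q : K) * ((q : K) + 1) - c) := by
  let f : ℕ → K := fun q => x + q * (q + 1) - c
  have f_succ_sub_f_zero (q : ℕ) : f (q + 1) - f 0 = ((q + 1) * (q + 2) : ℕ) := by
    simp only [f]
    push_cast
    ring
  have f_succ_ne_f_zero (q : ℕ) : f (q + 1) ≠ f 0 := by
    rw [← sub_ne_zero, f_succ_sub_f_zero]
    exact Nat.cast_ne_zero.mpr (by positivity)
  have prod_f_succ_sub (k : ℕ) :
      ∏ q ∈ range k, (f (q + 1) - f 0) = (k.factorial : K) * (k + 1).factorial := by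
    simp_rw [f_succ_sub_f_zero]
    exact_mod_cast prod_range_add_one_mul_add_two k
  have prod_Icc_f : ∏ q ∈ Icc 1 n, f q = ∏ q ∈ range n, f (q + 1) := by
    rw [range_eq_Ico, prod_Ico_add' f, zero_add, Ico_add_one_right_eq_Icc]
  have telescoped :=
    sum_prod_range_div_prod_sub_apply_zero f n fun q _ => f_succ_ne_f_zero q
  simp only [prod_f_succ_sub, ← prod_Icc_f] at telescoped
  simpa only [one_div_mul_eq_div] using telescoped

/-- For every natural number `n` and all real `x`, `c`:
`Σ_{k=0}^{n} (1/(k!(k+1)!)) ∏_{q=0}^{k-1} (x + q(q+1) - c)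
   = (1/(n!(n+1)!)) ∏_{q=1}^{n} (x + q(q+1) - c)`. -/
theorem stmt1 (n : ℕ) (x c : ℝ) :
    (∑ k ∈ Finset.range (n + 1),
        (1 / ((k.factorial : ℝ) * ((k + 1).factorial : ℝ))) *
          ∏ q ∈ Finset.range k, (x + (q : ℝ) * ((q : ℝ) + 1) - c)) =
      (1 / ((n.factorial : ℝ) * ((n + 1).factorial : ℝ))) *
        ∏ q ∈ Finset.Icc 1 n, (x + (q : ℝ) * ((q : ℝ) + 1) - c) :=
  stmt1_general n x c
end

section
/- For every natural number n ≥ 1 and every real number x, one has Σ_{k=0}^{n} ( (n+1)!/(k!·(k+1)!) + (n+2)!/(k!·(k+2)!) ) · ∏_{q=0}^{k−1} (x + q(q+1)) = (1/n!) · (2x + n + 4) · ∏_{q=2}^{n} (x + q(q+1)), where empty products equal 1. -/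
/-!
Write `Δ_{a,b}` for `deltaProd a b x`. The partial sums of `Δ_{0,k} / (k! (k+1)!)` and of
`Δ_{0,k} / (k! (k+2)!)` have the closed forms `Δ_{1,n+1} / (n! (n+1)!)` and
`(x + n + 2) Δ_{2,n+1} / (n! (n+2)!)`. Since `Δ_{0,n+1} = x Δ_{1,n+1} = x (x + 2) Δ_{2,n+1}`, a
closed form and the next term share the factor `Δ_{1,n+1}` or `Δ_{2,n+1}`, and the cofactors add up
to a multiple of `x + (n+1)(n+2)`, which extends the product by one factor. Multiplied by `(n+1)!`
and `(n+2)!`, the closed forms are `(x + 2) Δ_{2,n+1} / n!` and `(x + n + 2) Δ_{2,n+1} / n!`.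
-/

open Finset

/-- The operator product `Δ_{a,b,0} = ∏_{q=a}^{b-1} (∇² + q(q+1))` of the paper, with an element `x`
of a commutative semiring in place of `∇²`. The paper's `Δ_{k,0}` is the case `a = 0`, `b = k`. -/
def deltaProd {R : Type*} [CommSemiring R] (a b : ℕ) (x : R) : R :=
  ∏ q ∈ Ico a b, (x + (q : R) * ((q : R) + 1))

section CommSemiring

variable {R : Type*} [CommSemiring R] {a b : ℕ}

theorem deltaProd_self (a : ℕ) (x : R) : deltaProd a a x = 1 := by
  simp [deltaProd]

theorem deltaProd_succ_top (hab : a ≤ b) (x : R) :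
    deltaProd a (b + 1) x = deltaProd a b x * (x + (b : R) * ((b : R) + 1)) :=
  prod_Ico_succ_top hab _

theorem deltaProd_eq_mul_deltaProd_succ (hab : a < b) (x : R) :
    deltaProd a b x = (x + (a : R) * ((a : R) + 1)) * deltaProd (a + 1) b x :=
  prod_eq_prod_Ico_succ_bot hab _

theorem deltaProd_zero_succ (n : ℕ) (x : R) :
    deltaProd 0 (n + 1) x = x * deltaProd 1 (n + 1) x := by
  simpa using deltaProd_eq_mul_deltaProd_succ n.succ_pos x

theorem deltaProd_one_succ {n : ℕ} (hn : 1 ≤ n) (x : R) :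
    deltaProd 1 (n + 1) x = (x + 2) * deltaProd 2 (n + 1) x := by
  simpa [one_add_one_eq_two] using deltaProd_eq_mul_deltaProd_succ (Nat.lt_succ_of_le hn) x

end CommSemiring

section Field

variable {K : Type*} [Field K] [CharZero K]

theorem sum_deltaProd_div_factorial_mul_factorial_add_one (n : ℕ) (x : K) :
    ∑ k ∈ range (n + 1), deltaProd 0 k x / ((k.factorial : K) * ((k + 1).factorial : K)) =
      deltaProd 1 (n + 1) x / ((n.factorial : K) * ((n + 1).factorial : K)) := by
  induction n with
  | zero => simp [deltaProd_self]
  | succ n ih =>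
    have hfact : (n.factorial : K) ≠ 0 := mod_cast n.factorial_ne_zero
    have hn1 : (n : K) + 1 ≠ 0 := mod_cast n.succ_ne_zero
    have hn2 : (n : K) + 1 + 1 ≠ 0 := mod_cast (n + 1).succ_ne_zero
    rw [sum_range_succ, ih, deltaProd_zero_succ, deltaProd_succ_top (Nat.le_add_left 1 n)]
    simp only [Nat.factorial_succ]
    push_cast
    field_simp
    ring

theorem sum_deltaProd_div_factorial_mul_factorial_add_two {n : ℕ} (hn : 1 ≤ n) (x : K) :
    ∑ k ∈ range (n + 1), deltaProd 0 k x / ((k.factorial : K) * ((k + 2).factorial : K)) =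
      (x + n + 2) * deltaProd 2 (n + 1) x / ((n.factorial : K) * ((n + 2).factorial : K)) := by
  induction n, hn using Nat.le_induction with
  | base =>
    rw [sum_range_succ, sum_range_one, deltaProd_zero_succ]
    simp only [deltaProd_self, Nat.factorial]
    push_cast
    ring
  | succ n hn ih =>
    have hfact : (n.factorial : K) ≠ 0 := mod_cast n.factorial_ne_zero
    have hn1 : (n : K) + 1 ≠ 0 := mod_cast n.succ_ne_zero
    have hn2 : (n : K) + 1 + 1 ≠ 0 := mod_cast (n + 1).succ_ne_zero
    have hn3 : (n : K) + 2 + 1 ≠ 0 := mod_cast (n + 2).succ_ne_zero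
    rw [sum_range_succ, ih, deltaProd_zero_succ, deltaProd_one_succ hn,
      deltaProd_succ_top (Nat.succ_le_succ hn)]
    simp only [Nat.factorial_succ]
    push_cast
    field_simp
    ring

theorem stmt2_general {n : ℕ} (hn : 1 ≤ n) (x : K) :
    ∑ k ∈ range (n + 1),
        (((n + 1).factorial : K) / ((k.factorial : K) * ((k + 1).factorial : K)) +
            ((n + 2).factorial : K) / ((k.factorial : K) * ((k + 2).factorial : K))) *
          deltaProd 0 k x =
      1 / (n.factorial : K) * (2 * x + n + 4) * deltaProd 2 (n + 1) x := by
  have hfact (m : ℕ) : (m.factorial : K) ≠ 0 := mod_cast m.factorial_ne_zero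
  calc
    _ = (n + 1).factorial *
            ∑ k ∈ range (n + 1), deltaProd 0 k x / ((k.factorial : K) * ((k + 1).factorial : K)) +
          (n + 2).factorial *
            ∑ k ∈ range (n + 1),
              deltaProd 0 k x / ((k.factorial : K) * ((k + 2).factorial : K)) := by
      rw [mul_sum, mul_sum, ← sum_add_distrib]
      exact sum_congr rfl fun k _ ↦ by ring
    _ = (x + 2) * deltaProd 2 (n + 1) x / n.factorial +
          (x + n + 2) * deltaProd 2 (n + 1) x / n.factorial := by
      rw [sum_deltaProd_div_factorial_mul_factorial_add_one,
        sum_deltaProd_div_factorial_mul_factorial_add_two hn, deltaProd_one_succ hn]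
      field_simp [hfact]
    _ = _ := by ring

end Field

/-- For every natural number `n ≥ 1` and every real `x`:
`Σ_{k=0}^{n} ((n+1)!/(k!(k+1)!) + (n+2)!/(k!(k+2)!)) ∏_{q=0}^{k-1} (x + q(q+1))
   = (1/n!) (2x + n + 4) ∏_{q=2}^{n} (x + q(q+1))`. -/
theorem stmt2 (n : ℕ) (hn : 1 ≤ n) (x : ℝ) :
    (∑ k ∈ Finset.range (n + 1),
        (((n + 1).factorial : ℝ) / ((k.factorial : ℝ) * ((k + 1).factorial : ℝ)) +
            ((n + 2).factorial : ℝ) / ((k.factorial : ℝ) * ((k + 2).factorial : ℝ))) *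
          ∏ q ∈ Finset.range k, (x + (q : ℝ) * ((q : ℝ) + 1))) =
      (1 / (n.factorial : ℝ)) * (2 * x + (n : ℝ) + 4) *
        ∏ q ∈ Finset.Icc 2 n, (x + (q : ℝ) * ((q : ℝ) + 1)) := by
  simpa only [deltaProd, Nat.Ico_zero_eq_range, Ico_add_one_right_eq_Icc] using stmt2_general hn x
end

section
/- Let ℓ be a natural number and n ≥ −1 an integer, and let f : ℝ → ℝ be a function that is twice differentiable at every point of the open interval (−1,1) and satisfies, for all x ∈ (−1,1), (x²−1)²·f''(x) + 2x·(x²−1)·f'(x) − (ℓ(ℓ+1)·(x²−1) + (n+1)²)·f(x) = 0. Then the function u : ℝ → ℝ defined by u(τ) := f(tanh τ)/cosh τ is twice differentiable and satisfies, for all τ ∈ ℝ, u''(τ) + 2·tanh τ·u'(τ) + ℓ(ℓ+1)·sech²τ·u(τ) − n(n+2)·u(τ) = 0. -/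
/-!
Conjugating by the ansatz turns `d/dτ` into the first-order operator `D f = (1 - x²) f' - x f` in
`x = tanh τ`, since `tanh' = 1 - tanh²` and `(1 / cosh)' = -tanh / cosh`, and it turns `1 / cosh²`
into multiplication by `1 - x²`. The radial operator therefore becomes
`D² + 2 x D + ℓ (ℓ + 1) (1 - x²) - n (n + 2)`, which expands to the associated Legendre operator
of order `n + 1`.
-/

open Set

namespace DeSitter

theorem tanh_mem_Ioo (τ : ℝ) : Real.tanh τ ∈ Ioo (-1 : ℝ) 1 :=
  ⟨Real.neg_one_lt_tanh τ, Real.tanh_lt_one τ⟩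

theorem one_sub_tanh_sq (τ : ℝ) : 1 - Real.tanh τ ^ 2 = (1 / Real.cosh τ) ^ 2 := by
  have cosh_ne_zero := (Real.cosh_pos τ).ne'
  rw [Real.tanh_eq_sinh_div_cosh]
  field_simp
  exact Real.cosh_sq_sub_sinh_sq τ

theorem hasDerivAt_tanh (τ : ℝ) : HasDerivAt Real.tanh (1 - Real.tanh τ ^ 2) τ := by
  have cosh_ne_zero := (Real.cosh_pos τ).ne'
  rw [funext Real.tanh_eq_sinh_div_cosh]
  refine ((Real.hasDerivAt_sinh τ).fun_div (Real.hasDerivAt_cosh τ) cosh_ne_zero).congr_deriv ?_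
  field_simp

theorem hasDerivAt_inv_cosh (τ : ℝ) :
    HasDerivAt (fun t ↦ (Real.cosh t)⁻¹) (-(Real.tanh τ * (Real.cosh τ)⁻¹)) τ := by
  have cosh_ne_zero := (Real.cosh_pos τ).ne'
  refine ((Real.hasDerivAt_cosh τ).fun_inv cosh_ne_zero).congr_deriv ?_
  rw [Real.tanh_eq_sinh_div_cosh]
  field_simp

variable {E : Type*} [NormedAddCommGroup E] [NormedSpace ℝ E]

/-- The radial profile `τ ↦ f (tanh τ) / cosh τ` built from a function `f` on `(-1, 1)`. -/
noncomputable def ansatz (f : ℝ → E) (τ : ℝ) : E :=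
  (Real.cosh τ)⁻¹ • f (Real.tanh τ)

/-- The operator `D f = (1 - x²) f' - x f` in the variable `x = tanh τ`, to which `d/dτ` is
conjugated by `ansatz`. -/
noncomputable def conjDeriv (f : ℝ → E) (x : ℝ) : E :=
  (1 - x ^ 2) • deriv f x - x • f x

theorem hasDerivAt_ansatz {f : ℝ → E} {τ : ℝ} (hf : DifferentiableAt ℝ f (Real.tanh τ)) :
    HasDerivAt (ansatz f) (ansatz (conjDeriv f) τ) τ := by
  have hcomp := hf.hasDerivAt.scomp τ (hasDerivAt_tanh τ)
  refine ((hasDerivAt_inv_cosh τ).fun_smul hcomp).congr_deriv ?_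
  simp only [ansatz, conjDeriv, Function.comp_apply]
  module

theorem deriv_ansatz {f : ℝ → E} (hf : ∀ x ∈ Ioo (-1 : ℝ) 1, DifferentiableAt ℝ f x) :
    deriv (ansatz f) = ansatz (conjDeriv f) :=
  funext fun τ ↦ (hasDerivAt_ansatz (hf _ (tanh_mem_Ioo τ))).deriv

theorem hasDerivAt_conjDeriv {f : ℝ → E} {x : ℝ} (hf : DifferentiableAt ℝ f x)
    (hf' : DifferentiableAt ℝ (deriv f) x) :
    HasDerivAt (conjDeriv f)
      ((1 - x ^ 2) • deriv (deriv f) x - (3 * x) • deriv f x - f x) x := by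
  have hcoeff : HasDerivAt (fun y : ℝ ↦ 1 - y ^ 2) (-(2 * x)) x := by
    simpa using (hasDerivAt_pow 2 x).const_sub 1
  refine ((hcoeff.fun_smul hf'.hasDerivAt).fun_sub
    ((hasDerivAt_id' x).fun_smul hf.hasDerivAt)).congr_deriv ?_
  module

theorem conjDeriv_conjDeriv_add {f : ℝ → E} {x : ℝ} (hf : DifferentiableAt ℝ f x)
    (hf' : DifferentiableAt ℝ (deriv f) x) :
    conjDeriv (conjDeriv f) x + (2 * x) • conjDeriv f x =
      (x ^ 2 - 1) ^ 2 • deriv (deriv f) x + (2 * x * (x ^ 2 - 1)) • deriv f x - f x := by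
  rw [conjDeriv, (hasDerivAt_conjDeriv hf hf').deriv]
  simp only [conjDeriv]
  module

variable {R : Type*} [CommRing R] [Algebra ℝ R] [Module R E]

/-- The associated Legendre operator of degree `ℓ` and order `m`, with denominators cleared. The
parameters are taken in any commutative real algebra `R` acting on the values of `f`, so that they
may be complex. -/
noncomputable def assocLegendreOp (ℓ m : R) (f : ℝ → E) (x : ℝ) : E :=
  (x ^ 2 - 1) ^ 2 • deriv (deriv f) x + (2 * x * (x ^ 2 - 1)) • deriv f x -
    ((x ^ 2 - 1) • (ℓ * (ℓ + 1)) + m ^ 2) • f x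

/-- The operator of the radial mode equation on three-dimensional de Sitter space: angular momentum
`ℓ`, and eigenvalue `-n (n + 2)` of the wave operator. -/
noncomputable def radialModeOp (ℓ n : R) (u : ℝ → E) (τ : ℝ) : E :=
  deriv (deriv u) τ + (2 * Real.tanh τ) • deriv u τ +
    ((1 / Real.cosh τ) ^ 2 • (ℓ * (ℓ + 1))) • u τ - (n * (n + 2)) • u τ

variable [IsScalarTower ℝ R E]

theorem assocLegendreOp_eq_conjDeriv (ℓ n : R) {f : ℝ → E} {x : ℝ}
    (hf : DifferentiableAt ℝ f x) (hf' : DifferentiableAt ℝ (deriv f) x) :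
    assocLegendreOp ℓ (n + 1) f x =
      conjDeriv (conjDeriv f) x + (2 * x) • conjDeriv f x +
        ((1 - x ^ 2) • (ℓ * (ℓ + 1))) • f x - (n * (n + 2)) • f x := by
  rw [conjDeriv_conjDeriv_add hf hf']
  simp only [assocLegendreOp, Algebra.smul_def]
  module

theorem radialModeOp_ansatz (ℓ n : R) {f : ℝ → E}
    (hf : ∀ x ∈ Ioo (-1 : ℝ) 1, DifferentiableAt ℝ f x)
    (hf' : ∀ x ∈ Ioo (-1 : ℝ) 1, DifferentiableAt ℝ (deriv f) x) (τ : ℝ) :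
    radialModeOp ℓ n (ansatz f) τ = ansatz (assocLegendreOp ℓ (n + 1) f) τ := by
  have hτ := tanh_mem_Ioo τ
  have hDf : ∀ x ∈ Ioo (-1 : ℝ) 1, DifferentiableAt ℝ (conjDeriv f) x := fun x hx ↦
    (hasDerivAt_conjDeriv (hf x hx) (hf' x hx)).differentiableAt
  rw [radialModeOp, deriv_ansatz hf, deriv_ansatz hDf, ← one_sub_tanh_sq]
  simp only [ansatz, assocLegendreOp_eq_conjDeriv ℓ n (hf _ hτ) (hf' _ hτ), Algebra.smul_def]
  module

end DeSitter

open DeSitter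

theorem stmt8_general {R E : Type*} [NormedAddCommGroup E] [NormedSpace ℝ E] [CommRing R]
    [Algebra ℝ R] [Module R E] [IsScalarTower ℝ R E] (ℓ n : R) {f : ℝ → E}
    (hf : ∀ x ∈ Ioo (-1 : ℝ) 1, DifferentiableAt ℝ f x)
    (hf' : ∀ x ∈ Ioo (-1 : ℝ) 1, DifferentiableAt ℝ (deriv f) x)
    (hfeq : ∀ x ∈ Ioo (-1 : ℝ) 1, assocLegendreOp ℓ (n + 1) f x = 0) :
    (∀ τ, DifferentiableAt ℝ (ansatz f) τ) ∧ (∀ τ, DifferentiableAt ℝ (deriv (ansatz f)) τ) ∧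
      ∀ τ, radialModeOp ℓ n (ansatz f) τ = 0 := by
  refine ⟨fun τ ↦ ?_, fun τ ↦ ?_, fun τ ↦ ?_⟩
  · exact (hasDerivAt_ansatz (hf _ (tanh_mem_Ioo τ))).differentiableAt
  · have hDf := hasDerivAt_conjDeriv (hf _ (tanh_mem_Ioo τ)) (hf' _ (tanh_mem_Ioo τ))
    rw [deriv_ansatz hf]
    exact (hasDerivAt_ansatz hDf.differentiableAt).differentiableAt
  · rw [radialModeOp_ansatz ℓ n hf hf', ansatz, hfeq _ (tanh_mem_Ioo τ), smul_zero]

/-- The ansatz `u(τ) = f(tanh τ)/cosh τ` transforms the associated Legendre equation of degree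
`ℓ` and order `n+1` into the radial mode equation
`u'' + 2 tanh τ · u' + ℓ(ℓ+1) sech²τ · u - n(n+2) u = 0` on dS₃. -/
theorem stmt8 (ℓ : ℕ) (n : ℤ) (hn : -1 ≤ n) (f : ℝ → ℝ)
    (hf1 : ∀ x ∈ Set.Ioo (-1 : ℝ) 1, DifferentiableAt ℝ f x)
    (hf2 : ∀ x ∈ Set.Ioo (-1 : ℝ) 1, DifferentiableAt ℝ (deriv f) x)
    (hfeq : ∀ x ∈ Set.Ioo (-1 : ℝ) 1,
      (x ^ 2 - 1) ^ 2 * deriv (deriv f) x + 2 * x * (x ^ 2 - 1) * deriv f x -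
        ((ℓ : ℝ) * ((ℓ : ℝ) + 1) * (x ^ 2 - 1) + ((n : ℝ) + 1) ^ 2) * f x = 0)
    (u : ℝ → ℝ) (hu : ∀ τ, u τ = f (Real.tanh τ) / Real.cosh τ) :
    (∀ τ, DifferentiableAt ℝ u τ) ∧ (∀ τ, DifferentiableAt ℝ (deriv u) τ) ∧
      ∀ τ, deriv (deriv u) τ + 2 * Real.tanh τ * deriv u τ +
          (ℓ : ℝ) * ((ℓ : ℝ) + 1) * (1 / Real.cosh τ) ^ 2 * u τ -
          (n : ℝ) * ((n : ℝ) + 2) * u τ = 0 := by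
  obtain rfl : u = ansatz f := funext fun τ ↦ (hu τ).trans (div_eq_inv_mul _ _)
  simpa only [radialModeOp, smul_eq_mul, mul_comm ((1 / Real.cosh _) ^ 2)] using
    stmt8_general (ℓ : ℝ) (n : ℝ) hf1 hf2 fun x hx ↦ by
      simpa only [assocLegendreOp, smul_eq_mul, mul_comm (x ^ 2 - 1)] using hfeq x hx
end

section
/- Let ℓ be a natural number and n ≥ −1 an integer, and let F : ℂ → ℂ and F', F'' : ℂ → ℂ be such that for every real t, F has complex derivative F'(it) at it and F' has complex derivative F''(it) at it, and such that for all τ ∈ ℝ, at the point z = i·sinh τ one has (z²−1)²·F''(z) + 2z·(z²−1)·F'(z) − ((n+½)(n+³⁄₂)·(z²−1) + (ℓ+½)²)·F(z) = 0. Then the function u : ℝ → ℂ defined by u(τ) := F(i·sinh τ)/√(cosh τ) is twice differentiable and satisfies, for all τ ∈ ℝ, u''(τ) + 2·tanh τ·u'(τ) + ℓ(ℓ+1)·sech²τ·u(τ) − n(n+2)·u(τ) = 0. -/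
open Complex

/-!
Write `f τ = F (i sinh τ)`. Since `z² - 1 = -cosh² τ` at `z = i sinh τ`, the chain rule turns the
associated Legendre operator into `-cosh² τ` times
`f'' + tanh τ · f' + (μ² sech² τ - ν (ν + 1)) f`.
The factor `g = (cosh τ)^(-1/2)` has logarithmic derivative `-tanh τ / 2`, so passing to `u = g f`
changes the coefficient of the first derivative from `tanh τ` to `2 tanh τ` and shifts the potential
by `3/4 - sech² τ / 4`. For `ν = n + 1/2` and `μ = ℓ + 1/2` this yields the stated coefficients:
`ν (ν + 1) - 3/4 = n (n + 2)` and `μ² - 1/4 = ℓ (ℓ + 1)`.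
-/

section LogDeriv

variable {𝕜 A : Type*} [NontriviallyNormedField 𝕜] [NormedCommRing A] [NormedAlgebra 𝕜 A]
  {a f g : 𝕜 → A} {a' f' : A} {x : 𝕜}

theorem hasDerivAt_mul_of_hasDerivAt_mul_self (hg : HasDerivAt g (a x * g x) x)
    (hf : HasDerivAt f f' x) :
    HasDerivAt (fun y ↦ g y * f y) (g x * (f' + a x * f x)) x :=
  (hg.fun_mul hf).congr_deriv (by ring)

theorem hasDerivAt_deriv_mul_of_hasDerivAt_mul_self (hg : ∀ y, HasDerivAt g (a y * g y) y)
    (ha : HasDerivAt a a' x) (hf : Differentiable 𝕜 f) (hf' : DifferentiableAt 𝕜 (deriv f) x) :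
    HasDerivAt (deriv fun y ↦ g y * f y)
      (g x * (deriv (deriv f) x + 2 * a x * deriv f x + (a' + a x ^ 2) * f x)) x := by
  have deriv_mul_eq : (deriv fun y ↦ g y * f y) = fun y ↦ g y * (deriv f y + a y * f y) :=
    funext fun y ↦ (hasDerivAt_mul_of_hasDerivAt_mul_self (hg y) (hf y).hasDerivAt).deriv
  have hasDerivAt_twisted := hf'.hasDerivAt.fun_add (ha.fun_mul (hf x).hasDerivAt)
  rw [deriv_mul_eq]
  exact (hasDerivAt_mul_of_hasDerivAt_mul_self (hg x) hasDerivAt_twisted).congr_deriv (by ring)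

end LogDeriv

section DivSqrtCosh

theorem hasDerivAt_tanh (τ : ℝ) : HasDerivAt Real.tanh ((1 / Real.cosh τ) ^ 2) τ := by
  have cosh_ne_zero : Real.cosh τ ≠ 0 := (Real.cosh_pos τ).ne'
  rw [show Real.tanh = fun x ↦ Real.sinh x / Real.cosh x from
    funext Real.tanh_eq_sinh_div_cosh]
  refine ((Real.hasDerivAt_sinh τ).fun_div (Real.hasDerivAt_cosh τ) cosh_ne_zero).congr_deriv ?_
  rw [div_pow, one_pow, ← Real.cosh_sq_sub_sinh_sq τ]
  ring

theorem tanh_sq_add_sech_sq (τ : ℝ) : Real.tanh τ ^ 2 + (1 / Real.cosh τ) ^ 2 = 1 := by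
  have cosh_ne_zero : Real.cosh τ ≠ 0 := (Real.cosh_pos τ).ne'
  rw [Real.tanh_eq_sinh_div_cosh]
  field_simp
  exact (Real.cosh_sq τ).symm

theorem hasDerivAt_inv_sqrt_cosh (τ : ℝ) :
    HasDerivAt (fun x ↦ (√(Real.cosh x))⁻¹) (-(Real.tanh τ / 2) * (√(Real.cosh τ))⁻¹) τ := by
  have sqrt_pos : 0 < √(Real.cosh τ) := Real.sqrt_pos.2 (Real.cosh_pos τ)
  have sq_sqrt : √(Real.cosh τ) ^ 2 = Real.cosh τ := Real.sq_sqrt (Real.cosh_pos τ).le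
  refine (((Real.hasDerivAt_cosh τ).sqrt (Real.cosh_pos τ).ne').fun_inv sqrt_pos.ne').congr_deriv ?_
  rw [Real.tanh_eq_sinh_div_cosh, sq_sqrt]
  ring

theorem hasDerivAt_ofReal_inv_sqrt_cosh (τ : ℝ) :
    HasDerivAt (fun x : ℝ ↦ (√(Real.cosh x) : ℂ)⁻¹)
      (-(Real.tanh τ / 2 : ℂ) * (√(Real.cosh τ) : ℂ)⁻¹) τ := by
  simpa using (hasDerivAt_inv_sqrt_cosh τ).ofReal_comp

variable {f : ℝ → ℂ} {f' : ℂ} {τ : ℝ}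

theorem hasDerivAt_div_sqrt_cosh (hf : HasDerivAt f f' τ) :
    HasDerivAt (fun x ↦ f x / (√(Real.cosh x) : ℂ))
      ((f' - Real.tanh τ / 2 * f τ) / (√(Real.cosh τ) : ℂ)) τ := by
  simp only [div_eq_inv_mul _ (√(Real.cosh _) : ℂ)]
  exact (hasDerivAt_mul_of_hasDerivAt_mul_self (a := fun x : ℝ ↦ -(Real.tanh x / 2 : ℂ))
    (hasDerivAt_ofReal_inv_sqrt_cosh τ) hf).congr_deriv (by ring)

theorem hasDerivAt_deriv_div_sqrt_cosh (hf : Differentiable ℝ f)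
    (hf' : DifferentiableAt ℝ (deriv f) τ) :
    HasDerivAt (deriv fun x ↦ f x / (√(Real.cosh x) : ℂ))
      ((deriv (deriv f) τ - Real.tanh τ * deriv f τ +
        (Real.tanh τ ^ 2 / 4 - ((1 / Real.cosh τ : ℝ) : ℂ) ^ 2 / 2) * f τ) /
          (√(Real.cosh τ) : ℂ)) τ := by
  have hasDerivAt_neg_half_tanh : HasDerivAt (fun x : ℝ ↦ -(Real.tanh x / 2 : ℂ))
      (-(((1 / Real.cosh τ : ℝ) : ℂ) ^ 2 / 2)) τ := by
    simpa using ((hasDerivAt_tanh τ).ofReal_comp.div_const 2).fun_neg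
  simp only [div_eq_inv_mul _ (√(Real.cosh _) : ℂ)]
  exact (hasDerivAt_deriv_mul_of_hasDerivAt_mul_self hasDerivAt_ofReal_inv_sqrt_cosh
    hasDerivAt_neg_half_tanh hf hf').congr_deriv (by ring)

theorem deriv_deriv_div_sqrt_cosh_add_two_mul_tanh_mul_deriv (hf : Differentiable ℝ f)
    (hf' : DifferentiableAt ℝ (deriv f) τ) :
    deriv (deriv fun x ↦ f x / (√(Real.cosh x) : ℂ)) τ +
        2 * Real.tanh τ * deriv (fun x ↦ f x / (√(Real.cosh x) : ℂ)) τ =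
      (deriv (deriv f) τ + Real.tanh τ * deriv f τ +
        (((1 / Real.cosh τ : ℝ) : ℂ) ^ 2 / 4 - 3 / 4) * f τ) / (√(Real.cosh τ) : ℂ) := by
  have tanh_sq_add : (Real.tanh τ : ℂ) ^ 2 + ((1 / Real.cosh τ : ℝ) : ℂ) ^ 2 = 1 :=
    mod_cast tanh_sq_add_sech_sq τ
  rw [(hasDerivAt_deriv_div_sqrt_cosh hf hf').deriv,
    (hasDerivAt_div_sqrt_cosh (hf τ).hasDerivAt).deriv]
  linear_combination -(3 / 4) * f τ / (√(Real.cosh τ) : ℂ) * tanh_sq_add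

end DivSqrtCosh

section ImaginaryAxis

theorem I_mul_sinh_sq_sub_one (τ : ℝ) :
    (I * (Real.sinh τ : ℂ)) ^ 2 - 1 = -(Real.cosh τ : ℂ) ^ 2 := by
  have cosh_sq : (Real.cosh τ : ℂ) ^ 2 = (Real.sinh τ : ℂ) ^ 2 + 1 := mod_cast Real.cosh_sq τ
  rw [mul_pow, I_sq, cosh_sq]
  ring

theorem hasDerivAt_comp_I_mul_sinh {F : ℂ → ℂ} {F' : ℂ} {τ : ℝ}
    (hF : HasDerivAt F F' (I * (Real.sinh τ : ℂ))) :
    HasDerivAt (fun x : ℝ ↦ F (I * (Real.sinh x : ℂ))) (I * Real.cosh τ * F') τ :=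
  (hF.comp τ ((Real.hasDerivAt_sinh τ).ofReal_comp.const_mul I)).congr_deriv (mul_comm _ _)

variable {F F' F'' : ℂ → ℂ}

theorem deriv_comp_I_mul_sinh
    (hF : ∀ t : ℝ, HasDerivAt F (F' (I * (t : ℂ))) (I * (t : ℂ))) :
    (deriv fun x : ℝ ↦ F (I * (Real.sinh x : ℂ))) =
      fun x : ℝ ↦ I * Real.cosh x * F' (I * (Real.sinh x : ℂ)) :=
  funext fun x ↦ (hasDerivAt_comp_I_mul_sinh (hF (Real.sinh x))).deriv

theorem hasDerivAt_deriv_comp_I_mul_sinh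
    (hF : ∀ t : ℝ, HasDerivAt F (F' (I * (t : ℂ))) (I * (t : ℂ))) {w : ℂ} {τ : ℝ}
    (hF' : HasDerivAt F' w (I * (Real.sinh τ : ℂ))) :
    HasDerivAt (deriv fun x : ℝ ↦ F (I * (Real.sinh x : ℂ)))
      (I * Real.sinh τ * F' (I * (Real.sinh τ : ℂ)) - Real.cosh τ ^ 2 * w) τ := by
  rw [deriv_comp_I_mul_sinh hF]
  refine (((Real.hasDerivAt_cosh τ).ofReal_comp.const_mul I).fun_mul
    (hasDerivAt_comp_I_mul_sinh hF')).congr_deriv ?_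
  linear_combination (Real.cosh τ : ℂ) ^ 2 * w * I_sq

theorem assocLegendre_I_mul_sinh_eq
    (hF : ∀ t : ℝ, HasDerivAt F (F' (I * (t : ℂ))) (I * (t : ℂ)))
    (hF' : ∀ t : ℝ, HasDerivAt F' (F'' (I * (t : ℂ))) (I * (t : ℂ))) (a b : ℂ) (τ : ℝ) :
    ((I * (Real.sinh τ : ℂ)) ^ 2 - 1) ^ 2 * F'' (I * (Real.sinh τ : ℂ)) +
        2 * (I * (Real.sinh τ : ℂ)) * ((I * (Real.sinh τ : ℂ)) ^ 2 - 1) *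
          F' (I * (Real.sinh τ : ℂ)) -
        (a * ((I * (Real.sinh τ : ℂ)) ^ 2 - 1) + b) * F (I * (Real.sinh τ : ℂ)) =
      -(Real.cosh τ : ℂ) ^ 2 *
        (deriv (deriv fun x : ℝ ↦ F (I * (Real.sinh x : ℂ))) τ +
          Real.tanh τ * deriv (fun x : ℝ ↦ F (I * (Real.sinh x : ℂ))) τ +
          (b * ((1 / Real.cosh τ : ℝ) : ℂ) ^ 2 - a) * F (I * (Real.sinh τ : ℂ))) := by
  have cosh_ne_zero : (Real.cosh τ : ℂ) ≠ 0 := mod_cast (Real.cosh_pos τ).ne'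
  rw [(hasDerivAt_deriv_comp_I_mul_sinh hF (hF' _)).deriv, deriv_comp_I_mul_sinh hF,
    I_mul_sinh_sq_sub_one, Real.tanh_eq_sinh_div_cosh, ofReal_div, ofReal_div, ofReal_one]
  field_simp
  ring

end ImaginaryAxis

theorem stmt9_general (ℓ n : ℂ) (F F' F'' : ℂ → ℂ)
    (hF : ∀ t : ℝ, HasDerivAt F (F' (I * (t : ℂ))) (I * (t : ℂ)))
    (hF' : ∀ t : ℝ, HasDerivAt F' (F'' (I * (t : ℂ))) (I * (t : ℂ)))
    (hFeq : ∀ τ : ℝ,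
      ((I * (Real.sinh τ : ℂ)) ^ 2 - 1) ^ 2 * F'' (I * (Real.sinh τ : ℂ)) +
        2 * (I * (Real.sinh τ : ℂ)) * ((I * (Real.sinh τ : ℂ)) ^ 2 - 1) *
          F' (I * (Real.sinh τ : ℂ)) -
        ((n + 1 / 2) * (n + 3 / 2) * ((I * (Real.sinh τ : ℂ)) ^ 2 - 1) +
            (ℓ + 1 / 2) ^ 2) * F (I * (Real.sinh τ : ℂ)) = 0)
    (u : ℝ → ℂ)
    (hu : ∀ τ : ℝ, u τ = F (I * (Real.sinh τ : ℂ)) / (Real.sqrt (Real.cosh τ) : ℂ)) :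
    (∀ τ : ℝ, DifferentiableAt ℝ u τ) ∧ (∀ τ : ℝ, DifferentiableAt ℝ (deriv u) τ) ∧
      ∀ τ : ℝ, deriv (deriv u) τ + 2 * (Real.tanh τ : ℂ) * deriv u τ +
          ℓ * (ℓ + 1) * ((1 / Real.cosh τ : ℝ) : ℂ) ^ 2 * u τ -
          n * (n + 2) * u τ = 0 := by
  obtain rfl : u = fun τ : ℝ ↦ F (I * (Real.sinh τ : ℂ)) / (√(Real.cosh τ) : ℂ) := funext hu
  have differentiable_comp : Differentiable ℝ fun x : ℝ ↦ F (I * (Real.sinh x : ℂ)) :=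
    fun x ↦ (hasDerivAt_comp_I_mul_sinh (hF _)).differentiableAt
  have differentiable_deriv_comp :
      Differentiable ℝ (deriv fun x : ℝ ↦ F (I * (Real.sinh x : ℂ))) :=
    fun x ↦ (hasDerivAt_deriv_comp_I_mul_sinh hF (hF' _)).differentiableAt
  refine ⟨fun τ ↦ (hasDerivAt_div_sqrt_cosh (differentiable_comp τ).hasDerivAt).differentiableAt,
    fun τ ↦ (hasDerivAt_deriv_div_sqrt_cosh differentiable_comp
      (differentiable_deriv_comp τ)).differentiableAt, fun τ ↦ ?_⟩
  have neg_cosh_sq_ne_zero : -(Real.cosh τ : ℂ) ^ 2 ≠ 0 :=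
    neg_ne_zero.2 (pow_ne_zero 2 (mod_cast (Real.cosh_pos τ).ne'))
  have comp_equation :
      deriv (deriv fun x : ℝ ↦ F (I * (Real.sinh x : ℂ))) τ +
        Real.tanh τ * deriv (fun x : ℝ ↦ F (I * (Real.sinh x : ℂ))) τ +
        ((ℓ + 1 / 2) ^ 2 * ((1 / Real.cosh τ : ℝ) : ℂ) ^ 2 - (n + 1 / 2) * (n + 3 / 2)) *
          F (I * (Real.sinh τ : ℂ)) = 0 :=
    (mul_eq_zero_iff_left neg_cosh_sq_ne_zero).1
      ((assocLegendre_I_mul_sinh_eq hF hF' _ _ τ).symm.trans (hFeq τ))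
  rw [deriv_deriv_div_sqrt_cosh_add_two_mul_tanh_mul_deriv differentiable_comp
    (differentiable_deriv_comp τ)]
  linear_combination (√(Real.cosh τ) : ℂ)⁻¹ * comp_equation

/-- The ansatz `u(τ) = F(i sinh τ)/√(cosh τ)` transforms the associated Legendre equation of
degree `n + 1/2` and order `ℓ + 1/2` (evaluated on the imaginary axis) into the radial mode
equation `u'' + 2 tanh τ · u' + ℓ(ℓ+1) sech²τ · u - n(n+2) u = 0` on dS₃. -/
theorem stmt9 (ℓ : ℕ) (n : ℤ) (hn : -1 ≤ n) (F F' F'' : ℂ → ℂ)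
    (hF : ∀ t : ℝ, HasDerivAt F (F' (Complex.I * (t : ℂ))) (Complex.I * (t : ℂ)))
    (hF' : ∀ t : ℝ, HasDerivAt F' (F'' (Complex.I * (t : ℂ))) (Complex.I * (t : ℂ)))
    (hFeq : ∀ τ : ℝ,
      ((Complex.I * (Real.sinh τ : ℂ)) ^ 2 - 1) ^ 2 * F'' (Complex.I * (Real.sinh τ : ℂ)) +
        2 * (Complex.I * (Real.sinh τ : ℂ)) * ((Complex.I * (Real.sinh τ : ℂ)) ^ 2 - 1) *
          F' (Complex.I * (Real.sinh τ : ℂ)) -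
        (((n : ℂ) + 1 / 2) * ((n : ℂ) + 3 / 2) * ((Complex.I * (Real.sinh τ : ℂ)) ^ 2 - 1) +
            ((ℓ : ℂ) + 1 / 2) ^ 2) * F (Complex.I * (Real.sinh τ : ℂ)) = 0)
    (u : ℝ → ℂ)
    (hu : ∀ τ : ℝ, u τ = F (Complex.I * (Real.sinh τ : ℂ)) / (Real.sqrt (Real.cosh τ) : ℂ)) :
    (∀ τ : ℝ, DifferentiableAt ℝ u τ) ∧ (∀ τ : ℝ, DifferentiableAt ℝ (deriv u) τ) ∧
      ∀ τ : ℝ, deriv (deriv u) τ + 2 * (Real.tanh τ : ℂ) * deriv u τ +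
          (ℓ : ℂ) * ((ℓ : ℂ) + 1) * ((1 / Real.cosh τ : ℝ) : ℂ) ^ 2 * u τ -
          (n : ℂ) * ((n : ℂ) + 2) * u τ = 0 :=
  stmt9_general ℓ n F F' F'' hF hF' hFeq u hu
end

section
/- Let m ≤ ℓ be natural numbers and for 0 ≤ k ≤ ℓ−m set a_k := (−ℓ)_{m+k}·(ℓ+1)_{m+k} / (k!·(m+k)!) ∈ ℝ, where (a)_k is the ascending Pochhammer symbol. Define P : ℝ → ℝ on (−1,1) by P(x) := 2^{−m}·(1−x²)^{m/2}·Σ_{k=0}^{ℓ−m} a_k·((1−x)/2)^k, where (1−x²)^{m/2} denotes the positive real power. Then for all x ∈ (−1,1), (x²−1)²·P''(x) + 2x·(x²−1)·P'(x) − (ℓ(ℓ+1)·(x²−1) + m²)·P(x) = 0. -/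
/-!
The coefficients `a k` satisfy the recurrence of the Gauss hypergeometric series with parameters
`m - ℓ`, `m + ℓ + 1`, `m + 1` and vanish for `k > ℓ - m`, so `∑ a k * t ^ k` is a polynomial
solution of the hypergeometric equation. The substitution `t = (1 - x) / 2` turns this into the
Gegenbauer equation `(1 - x²) y'' - 2 (m + 1) x y' + (ℓ (ℓ + 1) - m (m + 1)) y = 0`, and
multiplying `y` by `(1 - x²) ^ (m / 2)` turns the Gegenbauer equation into the associated Legendre
equation.
-/

open Polynomial Set

theorem hypergeometric_eq_of_coeff_recurrence {R : Type*} [CommRing R] {a b c : R} {p : R[X]}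
    (hp : ∀ k : ℕ, (k + 1) * (c + k) * p.coeff (k + 1) = (a + k) * (b + k) * p.coeff k) :
    X * (1 - X) * derivative (derivative p) + (C c - C (a + b + 1) * X) * derivative p
      - C (a * b) * p = 0 := by
  have expand : X * (1 - X) * derivative (derivative p)
      + (C c - C (a + b + 1) * X) * derivative p - C (a * b) * p =
      X * derivative (derivative p) - X * (X * derivative (derivative p))
      + C c * derivative p - C (a + b + 1) * (X * derivative p) - C (a * b) * p := by ring
  rw [expand]
  ext k
  simp only [coeff_add, coeff_sub, coeff_C_mul, coeff_zero]
  rcases k with _ | _ | k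
  · simp only [coeff_X_mul_zero, coeff_derivative]
    linear_combination (norm := (push_cast; ring)) hp 0
  · simp only [coeff_X_mul, coeff_X_mul_zero, coeff_derivative]
    linear_combination (norm := (push_cast; ring)) hp 1
  · simp only [coeff_X_mul, coeff_derivative]
    linear_combination (norm := (push_cast; ring)) hp (k + 2)

theorem jacobi_eq_comp_of_hypergeometric_eq {K : Type*} [Field K] [NeZero (2 : K)] {a b c : K}
    {p : K[X]}
    (hp : X * (1 - X) * derivative (derivative p) + (C c - C (a + b + 1) * X) * derivative p
      - C (a * b) * p = 0) :
    let q := p.comp (C 2⁻¹ * (1 - X))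
    (1 - X ^ 2) * derivative (derivative q)
      + (C (a + b + 1 - 2 * c) - C (a + b + 1) * X) * derivative q - C (a * b) * q = 0 := by
  have two_mul_half : (2 : K[X]) * C 2⁻¹ = 1 := by
    rw [← C_ofNat, ← C_mul, mul_inv_cancel₀ two_ne_zero, C_1]
  have hcomp := congrArg (fun r : K[X] => r.comp (C 2⁻¹ * (1 - X))) hp
  simp only [sub_comp, add_comp, mul_comp, X_comp, C_comp, one_comp, zero_comp] at hcomp
  intro q
  have hq' : derivative q = -C 2⁻¹ * (derivative p).comp (C 2⁻¹ * (1 - X)) := by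
    simp [q, derivative_comp]
  have hq'' : derivative (derivative q) =
      C 2⁻¹ ^ 2 * (derivative (derivative p)).comp (C 2⁻¹ * (1 - X)) := by
    simp only [hq', neg_mul, derivative_neg, derivative_C_mul, derivative_comp, derivative_sub,
      derivative_one, derivative_X]
    ring
  rw [hq'', hq']
  simp only [q, C_sub, C_mul, C_ofNat] at hcomp ⊢
  linear_combination hcomp + (C 2⁻¹ * (1 - X) * (derivative (derivative p)).comp (C 2⁻¹ * (1 - X))
    + C c * (derivative p).comp (C 2⁻¹ * (1 - X))) * two_mul_half

section LegendreSeries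

variable {K : Type*} [Field K]

/-- The coefficient `(-ν)_{m+k} (ν+1)_{m+k} / (k! (m+k)!)` of the series part of the associated
Legendre function of order `m` and degree `ν`, as a series in `(1 - x) / 2`. -/
noncomputable def legendreCoeff (m : ℕ) (ν : K) (k : ℕ) : K :=
  (ascPochhammer K (m + k)).eval (-ν) * (ascPochhammer K (m + k)).eval (ν + 1) /
    ((k.factorial : K) * ((m + k).factorial : K))

theorem legendreCoeff_natCast_eq_zero {m ℓ k : ℕ} (h : ℓ < m + k) :
    legendreCoeff m (ℓ : K) k = 0 := by
  rw [legendreCoeff, ascPochhammer_eval_neg_coe_nat_of_lt h, zero_mul, zero_div]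

theorem legendreCoeff_succ [CharZero K] (m : ℕ) (ν : K) (k : ℕ) :
    (k + 1) * (m + 1 + k) * legendreCoeff m ν (k + 1) =
      (m - ν + k) * (m + ν + 1 + k) * legendreCoeff m ν k := by
  have hk : (k.factorial : K) ≠ 0 := mod_cast k.factorial_ne_zero
  have hmk : ((m + k).factorial : K) ≠ 0 := mod_cast (m + k).factorial_ne_zero
  have hk_succ : (k : K) + 1 ≠ 0 := k.cast_add_one_ne_zero
  have hmk_succ : (m : K) + k + 1 ≠ 0 := mod_cast (m + k).succ_ne_zero
  rw [legendreCoeff, legendreCoeff, ← add_assoc, ascPochhammer_succ_eval,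
    ascPochhammer_succ_eval, Nat.factorial_succ, Nat.factorial_succ]
  push_cast
  field_simp
  ring

variable (K) in
/-- The polynomial `∑ k, a k * t ^ k` in `t = (1 - x) / 2` formed from the coefficients
`legendreCoeff m ℓ` of integer degree `ℓ`. -/
noncomputable def legendreSeries (m ℓ : ℕ) : K[X] :=
  ∑ k ∈ Finset.range (ℓ - m + 1), monomial k (legendreCoeff m (ℓ : K) k)

theorem coeff_legendreSeries (m ℓ k : ℕ) :
    (legendreSeries K m ℓ).coeff k = legendreCoeff m (ℓ : K) k := by
  simp only [legendreSeries, finsetSum_coeff, coeff_monomial, Finset.sum_ite_eq',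
    Finset.mem_range, ite_eq_left_iff]
  intro hk
  exact (legendreCoeff_natCast_eq_zero (by omega)).symm

theorem gegenbauer_eq_legendreSeries_comp [CharZero K] (m ℓ : ℕ) :
    let q := (legendreSeries K m ℓ).comp (C 2⁻¹ * (1 - X))
    (1 - X ^ 2) * derivative (derivative q) - C (2 * ((m : K) + 1)) * X * derivative q
      + C ((ℓ : K) * (ℓ + 1) - m * (m + 1)) * q = 0 := by
  have hypergeometric := hypergeometric_eq_of_coeff_recurrence (p := legendreSeries K m ℓ)
    (a := (m : K) - ℓ) (b := m + ℓ + 1) (c := m + 1) fun k => by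
      simpa only [coeff_legendreSeries] using legendreCoeff_succ m (ℓ : K) k
  have jacobi := jacobi_eq_comp_of_hypergeometric_eq hypergeometric
  intro q
  simp only [C_add, C_sub, C_mul, C_1, C_ofNat] at jacobi ⊢
  linear_combination jacobi

end LegendreSeries

theorem hasDerivAt_one_sub_sq (x : ℝ) : HasDerivAt (fun z : ℝ => 1 - z ^ 2) (-(2 * x)) x := by
  simpa using (hasDerivAt_pow 2 x).const_sub 1

theorem rpow_eq_rpow_sub_one_mul {x : ℝ} (hx : x ≠ 0) (s : ℝ) : x ^ s = x ^ (s - 1) * x := by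
  rw [Real.rpow_sub_one hx, div_mul_cancel₀ _ hx]

theorem hasDerivAt_one_sub_sq_rpow_mul {f : ℝ → ℝ} {f' x : ℝ} (s : ℝ) (hx : 1 - x ^ 2 ≠ 0)
    (hf : HasDerivAt f f' x) :
    HasDerivAt (fun z => (1 - z ^ 2) ^ s * f z)
      ((1 - x ^ 2) ^ (s - 1) * ((1 - x ^ 2) * f' - 2 * s * x * f x)) x := by
  refine (((hasDerivAt_one_sub_sq x).rpow_const (p := s) (Or.inl hx)).mul hf).congr_deriv ?_
  rw [rpow_eq_rpow_sub_one_mul hx s]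
  ring

theorem one_sub_sq_ne_zero_of_mem_Ioo {x : ℝ} (hx : x ∈ Ioo (-1 : ℝ) 1) : 1 - x ^ 2 ≠ 0 := by
  nlinarith [hx.1, hx.2]

theorem eqOn_deriv_of_eqOn_one_sub_sq_rpow_mul {s : ℝ} {f f' P : ℝ → ℝ}
    (hf : ∀ x ∈ Ioo (-1 : ℝ) 1, HasDerivAt f (f' x) x)
    (hP : EqOn P (fun x => (1 - x ^ 2) ^ s * f x) (Ioo (-1) 1)) :
    EqOn (deriv P) (fun x => (1 - x ^ 2) ^ (s - 1) * ((1 - x ^ 2) * f' x - 2 * s * x * f x))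
      (Ioo (-1) 1) := fun x hx =>
  (hP.eventuallyEq_of_mem (isOpen_Ioo.mem_nhds hx)).deriv_eq.trans
    (hasDerivAt_one_sub_sq_rpow_mul s (one_sub_sq_ne_zero_of_mem_Ioo hx) (hf x hx)).deriv

theorem assocLegendre_eq_of_gegenbauer_eq {μ ν : ℝ} {y y' y'' P : ℝ → ℝ}
    (hy : ∀ x ∈ Ioo (-1 : ℝ) 1, HasDerivAt y (y' x) x)
    (hy' : ∀ x ∈ Ioo (-1 : ℝ) 1, HasDerivAt y' (y'' x) x)
    (hP : EqOn P (fun x => (1 - x ^ 2) ^ (μ / 2) * y x) (Ioo (-1) 1))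
    {x : ℝ} (hx : x ∈ Ioo (-1 : ℝ) 1)
    (gegenbauer : (1 - x ^ 2) * y'' x - 2 * (μ + 1) * x * y' x
      + (ν * (ν + 1) - μ * (μ + 1)) * y x = 0) :
    (x ^ 2 - 1) ^ 2 * deriv (deriv P) x + 2 * x * (x ^ 2 - 1) * deriv P x -
      (ν * (ν + 1) * (x ^ 2 - 1) + μ ^ 2) * P x = 0 := by
  have hP' := eqOn_deriv_of_eqOn_one_sub_sq_rpow_mul hy hP
  have hfactor : ∀ z ∈ Ioo (-1 : ℝ) 1,
      HasDerivAt (fun z => (1 - z ^ 2) * y' z - 2 * (μ / 2) * z * y z)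
        ((1 - z ^ 2) * y'' z - (μ + 2) * z * y' z - μ * y z) z := by
    intro z hz
    refine (((hasDerivAt_one_sub_sq z).mul (hy' z hz)).sub
      (((hasDerivAt_id' z).const_mul (2 * (μ / 2))).mul (hy z hz))).congr_deriv ?_
    ring
  have hP'' := eqOn_deriv_of_eqOn_one_sub_sq_rpow_mul hfactor hP'
  have hne := one_sub_sq_ne_zero_of_mem_Ioo hx
  rw [hP'' hx, hP' hx, hP hx]
  simp only [rpow_eq_rpow_sub_one_mul hne (μ / 2), rpow_eq_rpow_sub_one_mul hne (μ / 2 - 1)]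
  linear_combination (1 - x ^ 2) ^ (μ / 2 - 1 - 1) * (1 - x ^ 2) ^ 3 * gegenbauer

/-- The terminating series for the associated Legendre function of the first kind
`P(x) = 2^{-m} (1-x²)^{m/2} Σ_{k=0}^{ℓ-m} a_k ((1-x)/2)^k`, with
`a_k = (-ℓ)_{m+k} (ℓ+1)_{m+k}/(k!(m+k)!)`, satisfies the associated Legendre equation of
degree `ℓ` and order `m` on `(-1,1)`:
`(x²-1)² P'' + 2x(x²-1) P' - (ℓ(ℓ+1)(x²-1) + m²) P = 0`. -/
theorem stmt10 (m ℓ : ℕ) (hml : m ≤ ℓ) (a : ℕ → ℝ)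
    (ha : ∀ k, a k =
      (ascPochhammer ℝ (m + k)).eval (-(ℓ : ℝ)) * (ascPochhammer ℝ (m + k)).eval ((ℓ : ℝ) + 1) /
        ((k.factorial : ℝ) * ((m + k).factorial : ℝ)))
    (P : ℝ → ℝ)
    (hP : ∀ x ∈ Set.Ioo (-1 : ℝ) 1, P x =
      ((2 : ℝ) ^ m)⁻¹ * (1 - x ^ 2) ^ ((m : ℝ) / 2) *
        ∑ k ∈ Finset.range (ℓ - m + 1), a k * ((1 - x) / 2) ^ k) :
    ∀ x ∈ Set.Ioo (-1 : ℝ) 1,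
      (x ^ 2 - 1) ^ 2 * deriv (deriv P) x + 2 * x * (x ^ 2 - 1) * deriv P x -
        ((ℓ : ℝ) * ((ℓ : ℝ) + 1) * (x ^ 2 - 1) + (m : ℝ) ^ 2) * P x = 0 := by
  obtain rfl : a = legendreCoeff m (ℓ : ℝ) := funext ha
  set q : ℝ[X] := C ((2 : ℝ) ^ m)⁻¹ * (legendreSeries ℝ m ℓ).comp (C 2⁻¹ * (1 - X)) with hq
  have gegenbauer (x : ℝ) : (1 - x ^ 2) * q.derivative.derivative.eval x
      - 2 * (m + 1) * x * q.derivative.eval x + (ℓ * (ℓ + 1) - m * (m + 1)) * q.eval x = 0 := by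
    have h := congrArg (eval x) (gegenbauer_eq_legendreSeries_comp (K := ℝ) m ℓ)
    simp only [eval_add, eval_sub, eval_mul, eval_pow, eval_X, eval_C, eval_one, eval_zero] at h
    simp only [hq, derivative_C_mul, eval_C_mul]
    linear_combination ((2 : ℝ) ^ m)⁻¹ * h
  have hPq : EqOn P (fun x => (1 - x ^ 2) ^ ((m : ℝ) / 2) * q.eval x) (Ioo (-1) 1) := by
    intro x hx
    simp only [hP x hx, hq, eval_comp, legendreSeries, eval_finsetSum, eval_monomial,
      eval_mul, eval_C, eval_sub, eval_one, eval_X, div_eq_inv_mul (1 - x)]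
    ring
  exact fun x hx => assocLegendre_eq_of_gegenbauer_eq (fun z _ => q.hasDerivAt z)
    (fun z _ => q.derivative.hasDerivAt z) hPq hx (gegenbauer x)
end

section
/- The function u : ℝ → ℝ defined by u(τ) := sinh τ − 2τ·cosh τ + τ/cosh τ is twice differentiable and satisfies u''(τ) + 2·tanh τ·u'(τ) − 3·u(τ) = −8·sinh τ for all τ ∈ ℝ. -/
/-!
The substitution `v = cosh · u` turns `u'' + 2 tanh · u'` into `(v'' - v) / cosh`, so the equation
becomes the constant-coefficient equation `v'' - 4 v = -4 sinh (2τ)`. Here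
`v = sinh (2τ) / 2 - τ cosh (2τ)`, and the forcing is resonant: the homogeneous part
`sinh (2τ) / 2` contributes nothing, while the secular term `-τ cosh (2τ)` produces `-4 sinh (2τ)`.
-/

open Real

theorem deriv_deriv_fun_mul {𝕜 𝔸 : Type*} [NontriviallyNormedField 𝕜] [NormedRing 𝔸]
    [NormedAlgebra 𝕜 𝔸] {f g : 𝕜 → 𝔸} {x : 𝕜}
    (hf : ContDiffAt 𝕜 2 f x) (hg : ContDiffAt 𝕜 2 g x) :
    deriv (deriv (fun t ↦ f t * g t)) x =
      f x * deriv (deriv g) x + 2 * deriv f x * deriv g x + deriv (deriv f) x * g x := by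
  simpa [Finset.sum_range_succ, iteratedDeriv_succ] using iteratedDeriv_fun_mul (n := 2) hf hg

theorem deriv_deriv_cosh_mul {u : ℝ → ℝ} {τ : ℝ} (hu : ContDiffAt ℝ 2 u τ) :
    deriv (deriv (fun t ↦ cosh t * u t)) τ =
      cosh τ * (deriv (deriv u) τ + 2 * tanh τ * deriv u τ + u τ) := by
  have cosh_mul_tanh : cosh τ * tanh τ = sinh τ := by
    rw [tanh_eq_sinh_div_cosh, mul_div_cancel₀ _ (cosh_pos τ).ne']
  rw [deriv_deriv_fun_mul contDiff_cosh.contDiffAt hu, Real.deriv_cosh, Real.deriv_sinh,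
    ← cosh_mul_tanh]
  ring

section Resonance

variable (a k τ : ℝ)

theorem hasDerivAt_cosh_const_mul : HasDerivAt (fun t ↦ cosh (k * t)) (k * sinh (k * τ)) τ := by
  simpa [mul_comm] using ((hasDerivAt_id' τ).const_mul k).cosh

theorem hasDerivAt_sinh_const_mul : HasDerivAt (fun t ↦ sinh (k * t)) (k * cosh (k * τ)) τ := by
  simpa [mul_comm] using ((hasDerivAt_id' τ).const_mul k).sinh

theorem deriv_mul_sinh_sub_mul_cosh :
    deriv (fun t ↦ a * sinh (k * t) - t * cosh (k * t)) =
      fun t ↦ (a * k - 1) * cosh (k * t) - k * (t * sinh (k * t)) := by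
  ext t
  have h := ((hasDerivAt_sinh_const_mul k t).const_mul a).sub
    ((hasDerivAt_id' t).mul (hasDerivAt_cosh_const_mul k t))
  exact (h.congr_deriv (by ring)).deriv

theorem deriv_deriv_mul_sinh_sub_mul_cosh :
    deriv (deriv (fun t ↦ a * sinh (k * t) - t * cosh (k * t))) τ =
      k ^ 2 * (a * sinh (k * τ) - τ * cosh (k * τ)) - 2 * k * sinh (k * τ) := by
  rw [deriv_mul_sinh_sub_mul_cosh]
  have h := ((hasDerivAt_cosh_const_mul k τ).const_mul (a * k - 1)).sub
    (((hasDerivAt_id' τ).mul (hasDerivAt_sinh_const_mul k τ)).const_mul k)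
  exact (h.congr_deriv (by ring)).deriv

end Resonance

theorem cosh_mul_sinh_sub_mul_cosh_add_div_cosh (τ : ℝ) :
    cosh τ * (sinh τ - 2 * τ * cosh τ + τ / cosh τ) =
      1 / 2 * sinh (2 * τ) - τ * cosh (2 * τ) := by
  have cosh_ne_zero : cosh τ ≠ 0 := (cosh_pos τ).ne'
  rw [sinh_two_mul, cosh_two_mul, sinh_sq]
  field_simp
  ring

/-- The function `u(τ) = sinh τ - 2τ cosh τ + τ/cosh τ` is twice differentiable and satisfies
`u'' + 2 tanh τ · u' - 3u = -8 sinh τ` on `ℝ`. -/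
theorem stmt16 (u : ℝ → ℝ)
    (hu : ∀ τ, u τ = Real.sinh τ - 2 * τ * Real.cosh τ + τ / Real.cosh τ) :
    (∀ τ, DifferentiableAt ℝ u τ) ∧ (∀ τ, DifferentiableAt ℝ (deriv u) τ) ∧
      ∀ τ, deriv (deriv u) τ + 2 * Real.tanh τ * deriv u τ - 3 * u τ =
        -8 * Real.sinh τ := by
  have contDiff_u : ContDiff ℝ 2 u := by
    rw [funext hu]
    fun_prop (disch := exact fun τ ↦ (cosh_pos τ).ne')
  have cosh_mul_u (t : ℝ) : cosh t * u t = 1 / 2 * sinh (2 * t) - t * cosh (2 * t) := by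
    rw [hu, cosh_mul_sinh_sub_mul_cosh_add_div_cosh]
  refine ⟨contDiff_u.differentiable two_ne_zero, contDiff_u.differentiable_deriv_two, fun τ ↦ ?_⟩
  have transformed : cosh τ * (deriv (deriv u) τ + 2 * tanh τ * deriv u τ + u τ) =
      2 ^ 2 * (cosh τ * u τ) - 2 * 2 * sinh (2 * τ) := by
    rw [← deriv_deriv_cosh_mul contDiff_u.contDiffAt, funext cosh_mul_u,
      deriv_deriv_mul_sinh_sub_mul_cosh, cosh_mul_u]
  rw [sinh_two_mul] at transformed
  apply mul_left_cancel₀ (cosh_pos τ).ne'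
  linear_combination transformed
end

section
/- Let u : ℝ → ℝ be twice differentiable and satisfy u''(τ) + 2·tanh τ·u'(τ) − 3·u(τ) = 0 for all τ ∈ ℝ. Then there exist constants C, D ∈ ℝ such that u(τ) = C·sinh τ + D·cosh(2τ)/cosh τ for all τ ∈ ℝ. -/
/-!
The substitution `v = cosh · u` removes the first-order term: `u'' + 2 tanh · u' = n (n + 2) u`
becomes `v'' = (n + 1)² v`. The operator `∂² - k²` factors as `(∂ - k) (∂ + k)`, so `v' + k v` and
`v' - k v` are multiples of `exp (k τ)` and `exp (-k τ)`, and `v` is their difference over `2 k`.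
For `n = 1` the odd solution `sinh (2 τ) / cosh τ` is `2 sinh τ`.
-/

section VectorValued

variable {E : Type*} [NormedAddCommGroup E] [NormedSpace ℝ E]

theorem eq_exp_smul_of_hasDerivAt_smul {f : ℝ → E} {a : ℝ}
    (hf : ∀ t, HasDerivAt f (a • f t) t) (t : ℝ) : f t = Real.exp (a * t) • f 0 := by
  have hexp (s : ℝ) : HasDerivAt (fun s ↦ Real.exp (-(a * s))) (Real.exp (-(a * s)) * -a) s := by
    simpa using ((hasDerivAt_id s).const_mul a).neg.exp
  have hconst (s : ℝ) : HasDerivAt (fun s ↦ Real.exp (-(a * s)) • f s) 0 s :=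
    ((hexp s).smul (hf s)).congr_deriv (by module)
  have hval : Real.exp (-(a * t)) • f t = f 0 := by
    simpa using is_const_of_deriv_eq_zero (fun s ↦ (hconst s).differentiableAt)
      (fun s ↦ (hconst s).deriv) t 0
  rw [← hval, smul_smul, ← Real.exp_add, add_neg_cancel, Real.exp_zero, one_smul]

theorem eq_cosh_smul_add_sinh_smul_of_hasDerivAt {v w : ℝ → E} {k : ℝ} (hk : k ≠ 0)
    (hv : ∀ t, HasDerivAt v (w t) t) (hw : ∀ t, HasDerivAt w (k ^ 2 • v t) t) (t : ℝ) :
    v t = Real.cosh (k * t) • v 0 + (Real.sinh (k * t) / k) • w 0 := by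
  have hplus : w t + k • v t = Real.exp (k * t) • (w 0 + k • v 0) :=
    eq_exp_smul_of_hasDerivAt_smul (f := fun s ↦ w s + k • v s)
      (fun s ↦ ((hw s).add ((hv s).const_smul k)).congr_deriv (by module)) t
  have hminus : w t - k • v t = Real.exp (-k * t) • (w 0 - k • v 0) :=
    eq_exp_smul_of_hasDerivAt_smul (f := fun s ↦ w s - k • v s)
      (fun s ↦ ((hw s).sub ((hv s).const_smul k)).congr_deriv (by module)) t
  calc
    v t = (2 * k)⁻¹ • ((w t + k • v t) - (w t - k • v t)) := by
      match_scalars <;> field_simp <;> ring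
    _ = Real.cosh (k * t) • v 0 + (Real.sinh (k * t) / k) • w 0 := by
      rw [hplus, hminus, neg_mul, Real.cosh_eq, Real.sinh_eq]
      match_scalars <;> field_simp
      ring

theorem hasDerivAt_cosh_smul_deriv_add_sinh_smul {u u' : ℝ → E} {c τ : ℝ}
    (hu : HasDerivAt u (u' τ) τ)
    (hu' : HasDerivAt u' (c • u τ - (2 * Real.tanh τ) • u' τ) τ) :
    HasDerivAt (fun s ↦ Real.cosh s • u' s + Real.sinh s • u s)
      ((c + 1) • Real.cosh τ • u τ) τ := by
  refine (((Real.hasDerivAt_cosh τ).smul hu').add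
    ((Real.hasDerivAt_sinh τ).smul hu)).congr_deriv ?_
  have hcosh : Real.cosh τ ≠ 0 := (Real.cosh_pos τ).ne'
  rw [Real.tanh_eq_sinh_div_cosh]
  match_scalars <;> field_simp
  ring

theorem stmt18_general {u u' : ℝ → E} {n : ℝ} (hn : n ≠ -1)
    (hu : ∀ τ, HasDerivAt u (u' τ) τ)
    (hu' : ∀ τ, HasDerivAt u' ((n * (n + 2)) • u τ - (2 * Real.tanh τ) • u' τ) τ) (τ : ℝ) :
    u τ = (Real.cosh ((n + 1) * τ) / Real.cosh τ) • u 0 +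
      (Real.sinh ((n + 1) * τ) / ((n + 1) * Real.cosh τ)) • u' 0 := by
  have hk : n + 1 ≠ 0 := fun h ↦ hn (eq_neg_of_add_eq_zero_left h)
  have hcosh : Real.cosh τ ≠ 0 := (Real.cosh_pos τ).ne'
  have hv : Real.cosh τ • u τ = Real.cosh ((n + 1) * τ) • u 0 +
      (Real.sinh ((n + 1) * τ) / (n + 1)) • u' 0 := by
    simpa using eq_cosh_smul_add_sinh_smul_of_hasDerivAt (v := fun s ↦ Real.cosh s • u s) hk
      (fun s ↦ (Real.hasDerivAt_cosh s).smul (hu s))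
      (fun s ↦ (hasDerivAt_cosh_smul_deriv_add_sinh_smul (hu s) (hu' s)).congr_deriv (by module)) τ
  rw [← inv_smul_smul₀ hcosh (u τ), hv]
  match_scalars <;> field_simp

end VectorValued

/-- Classification of the `n = 1`, `ℓ = 0` scalar harmonics on dS₃: any twice differentiable
solution of `u'' + 2 tanh τ · u' - 3u = 0` on `ℝ` is of the form
`u(τ) = C sinh τ + D cosh(2τ)/cosh τ`. -/
theorem stmt18 (u : ℝ → ℝ)
    (hu1 : ∀ τ, DifferentiableAt ℝ u τ)
    (hu2 : ∀ τ, DifferentiableAt ℝ (deriv u) τ)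
    (hueq : ∀ τ, deriv (deriv u) τ + 2 * Real.tanh τ * deriv u τ - 3 * u τ = 0) :
    ∃ C D : ℝ, ∀ τ, u τ = C * Real.sinh τ + D * Real.cosh (2 * τ) / Real.cosh τ := by
  refine ⟨deriv u 0, u 0, fun τ ↦ ?_⟩
  have hcosh : Real.cosh τ ≠ 0 := (Real.cosh_pos τ).ne'
  have hsol := stmt18_general (n := 1) (by norm_num) (fun s ↦ (hu1 s).hasDerivAt)
    (fun s ↦ (hu2 s).hasDerivAt.congr_deriv (by
      simp only [smul_eq_mul]
      linear_combination hueq s)) τ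
  rw [hsol, one_add_one_eq_two, Real.sinh_two_mul, smul_eq_mul, smul_eq_mul]
  field_simp
  ring
end

section
/- Let u : ℝ → ℝ be twice differentiable and satisfy u''(τ) + 2·tanh τ·u'(τ) + 2·sech²τ·u(τ) − 3·u(τ) = 0 for all τ ∈ ℝ. Then there exist constants C, D ∈ ℝ such that u(τ) = C·cosh τ + D·(sinh τ − (1/3)·sinh τ·tanh²τ) for all τ ∈ ℝ. -/
/-!
Any two solutions `f`, `u` of `y'' + p y' + q y = 0` have a Wronskian `W(f, u)` solving the
first-order equation `w' = -p w`. If `W(f, g)` never vanishes, the quotients `W(f, u) / W(f, g)`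
and `W(g, u) / W(f, g)` are therefore constant, and the algebraic identity
`W(f, g) u = W(f, u) g - W(g, u) f` exhibits `u` as a combination of `f` and `g`.
For the radial equation, the even and odd modes have Wronskian `1 / cosh ^ 2`.
-/

section LinearODE

variable {𝕜 E : Type*} [RCLike 𝕜] [NormedAddCommGroup E] [NormedSpace 𝕜 E]

theorem inv_smul_eq_inv_smul_of_hasDerivAt_smul {a w : 𝕜 → 𝕜} {v : 𝕜 → E}
    (hw : ∀ t, HasDerivAt w (a t * w t) t) (hv : ∀ t, HasDerivAt v (a t • v t) t)
    (hw0 : ∀ t, w t ≠ 0) (s t : 𝕜) : (w s)⁻¹ • v s = (w t)⁻¹ • v t := by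
  have hquot (t : 𝕜) : HasDerivAt (fun t => (w t)⁻¹ • v t) 0 t := by
    refine (((hw t).fun_inv (hw0 t)).fun_smul (hv t)).congr_deriv ?_
    have hwt := hw0 t
    match_scalars
    field_simp
    ring
  exact is_const_of_deriv_eq_zero (fun t => (hquot t).differentiableAt)
    (fun t => (hquot t).deriv) s t

/-- The function `u` is a twice differentiable global solution of the homogeneous linear equation
`u'' + p u' + q u = 0`. The coefficients are scalar, whereas `u` may be vector-valued. -/
structure IsLinearODESolution (p q : 𝕜 → 𝕜) (u : 𝕜 → E) : Prop where
  differentiable : Differentiable 𝕜 u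
  differentiable_deriv : Differentiable 𝕜 (deriv u)
  equation : ∀ t, deriv (deriv u) t + p t • deriv u t + q t • u t = 0

/-- The Wronskian `f u' - f' u` of a scalar function `f` and a possibly vector-valued function
`u`. -/
noncomputable def wronskian (f : 𝕜 → 𝕜) (u : 𝕜 → E) (t : 𝕜) : E :=
  f t • deriv u t - deriv f t • u t

theorem wronskian_smul_eq_sub (f g : 𝕜 → 𝕜) (u : 𝕜 → E) (t : 𝕜) :
    wronskian f g t • u t = g t • wronskian f u t - f t • wronskian g u t := by
  simp only [wronskian, smul_eq_mul]
  module

namespace IsLinearODESolution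

variable {p q f g : 𝕜 → 𝕜} {u u' u'' : 𝕜 → E}

theorem of_hasDerivAt (hu : ∀ t, HasDerivAt u (u' t) t) (hu' : ∀ t, HasDerivAt u' (u'' t) t)
    (heq : ∀ t, u'' t + p t • u' t + q t • u t = 0) : IsLinearODESolution p q u := by
  have hderiv : deriv u = u' := funext fun t => (hu t).deriv
  refine ⟨fun t => (hu t).differentiableAt, ?_, fun t => ?_⟩
  · rw [hderiv]
    exact fun t => (hu' t).differentiableAt
  · rw [hderiv, (hu' t).deriv]
    exact heq t

theorem hasDerivAt_wronskian (hf : IsLinearODESolution p q f) (hu : IsLinearODESolution p q u)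
    (t : 𝕜) : HasDerivAt (wronskian f u) (-p t • wronskian f u t) t := by
  have hW := ((hf.differentiable t).hasDerivAt.fun_smul
      (hu.differentiable_deriv t).hasDerivAt).fun_sub
    ((hf.differentiable_deriv t).hasDerivAt.fun_smul (hu.differentiable t).hasDerivAt)
  have hf'' : deriv (deriv f) t = -(p t * deriv f t + q t * f t) :=
    eq_neg_of_add_eq_zero_left ((add_assoc _ _ _).symm.trans (hf.equation t))
  have hu'' : deriv (deriv u) t = -(p t • deriv u t + q t • u t) :=
    eq_neg_of_add_eq_zero_left ((add_assoc _ _ _).symm.trans (hu.equation t))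
  refine hW.congr_deriv ?_
  rw [hf'', hu'', wronskian]
  module

theorem exists_eq_smul_add_smul (hf : IsLinearODESolution p q f) (hg : IsLinearODESolution p q g)
    (hW : ∀ t, wronskian f g t ≠ 0) (hu : IsLinearODESolution p q u) :
    ∃ C D : E, ∀ t, u t = f t • C + g t • D := by
  have hconst {h : 𝕜 → 𝕜} (hh : IsLinearODESolution p q h) (t : 𝕜) :
      (wronskian f g t)⁻¹ • wronskian h u t = (wronskian f g 0)⁻¹ • wronskian h u 0 :=
    inv_smul_eq_inv_smul_of_hasDerivAt_smul (hf.hasDerivAt_wronskian hg)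
      (hh.hasDerivAt_wronskian hu) hW t 0
  refine ⟨-((wronskian f g 0)⁻¹ • wronskian g u 0), (wronskian f g 0)⁻¹ • wronskian f u 0,
    fun t => ?_⟩
  calc u t = (wronskian f g t)⁻¹ • (g t • wronskian f u t - f t • wronskian g u t) := by
        rw [← wronskian_smul_eq_sub, inv_smul_smul₀ (hW t)]
    _ = f t • -((wronskian f g t)⁻¹ • wronskian g u t)
          + g t • (wronskian f g t)⁻¹ • wronskian f u t := by module
    _ = _ := by rw [hconst hf, hconst hg]

end IsLinearODESolution

end LinearODE

section RadialEquation

open Real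

/-- The radial part of the `p`-type harmonic with `n = ℓ = 1` on three-dimensional de Sitter
space; the radial part of the `q`-type harmonic is `cosh`. -/
noncomputable def oddRadialMode (τ : ℝ) : ℝ :=
  sinh τ - (1 / 3) * sinh τ * tanh τ ^ 2

theorem oddRadialMode_eq (τ : ℝ) :
    oddRadialMode τ = 2 / 3 * sinh τ + 1 / 3 * (sinh τ / cosh τ ^ 2) := by
  have hcosh : cosh τ ≠ 0 := (cosh_pos τ).ne'
  rw [oddRadialMode, tanh_eq_sinh_div_cosh]
  field_simp
  linear_combination sinh τ * cosh_sq τ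

theorem hasDerivAt_oddRadialMode (τ : ℝ) :
    HasDerivAt oddRadialMode (2 / 3 * cosh τ - 1 / 3 / cosh τ + 2 / 3 / cosh τ ^ 3) τ := by
  have hcosh : cosh τ ≠ 0 := (cosh_pos τ).ne'
  rw [funext oddRadialMode_eq]
  refine (((hasDerivAt_sinh τ).const_mul (2 / 3)).fun_add
    (((hasDerivAt_sinh τ).fun_div ((hasDerivAt_cosh τ).fun_pow 2)
      (pow_ne_zero 2 hcosh)).const_mul (1 / 3))).congr_deriv ?_
  field_simp
  linear_combination 2 * cosh τ * cosh_sq τ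

theorem hasDerivAt_deriv_oddRadialMode (τ : ℝ) :
    HasDerivAt (fun t => 2 / 3 * cosh t - 1 / 3 / cosh t + 2 / 3 / cosh t ^ 3)
      (2 / 3 * sinh τ + 1 / 3 * sinh τ / cosh τ ^ 2 - 2 * sinh τ / cosh τ ^ 4) τ := by
  have hcosh : cosh τ ≠ 0 := (cosh_pos τ).ne'
  refine ((((hasDerivAt_cosh τ).const_mul (2 / 3)).fun_sub
    ((hasDerivAt_const τ (1 / 3)).fun_div (hasDerivAt_cosh τ) hcosh)).fun_add
    ((hasDerivAt_const τ (2 / 3)).fun_div ((hasDerivAt_cosh τ).fun_pow 3)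
      (pow_ne_zero 3 hcosh))).congr_deriv ?_
  field_simp
  ring

theorem isLinearODESolution_cosh :
    IsLinearODESolution (fun τ => 2 * tanh τ) (fun τ => 2 * (1 / cosh τ) ^ 2 - 3) cosh := by
  refine .of_hasDerivAt hasDerivAt_cosh hasDerivAt_sinh fun τ => ?_
  have hcosh : cosh τ ≠ 0 := (cosh_pos τ).ne'
  simp only [smul_eq_mul, tanh_eq_sinh_div_cosh]
  field_simp
  linear_combination -2 * cosh_sq τ

theorem isLinearODESolution_oddRadialMode :
    IsLinearODESolution (fun τ => 2 * tanh τ) (fun τ => 2 * (1 / cosh τ) ^ 2 - 3)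
      oddRadialMode := by
  refine .of_hasDerivAt hasDerivAt_oddRadialMode hasDerivAt_deriv_oddRadialMode fun τ => ?_
  have hcosh : cosh τ ≠ 0 := (cosh_pos τ).ne'
  simp only [smul_eq_mul, oddRadialMode_eq, tanh_eq_sinh_div_cosh]
  field_simp
  ring

theorem wronskian_cosh_oddRadialMode (τ : ℝ) :
    wronskian cosh oddRadialMode τ = 1 / cosh τ ^ 2 := by
  have hcosh : cosh τ ≠ 0 := (cosh_pos τ).ne'
  rw [wronskian, (hasDerivAt_oddRadialMode τ).deriv, (hasDerivAt_cosh τ).deriv, oddRadialMode_eq]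
  simp only [smul_eq_mul]
  field_simp
  linear_combination (2 * cosh τ ^ 2 + 1) * cosh_sq τ

theorem stmt19_general {E : Type*} [NormedAddCommGroup E] [NormedSpace ℝ E] (u : ℝ → E)
    (hu1 : ∀ τ, DifferentiableAt ℝ u τ)
    (hu2 : ∀ τ, DifferentiableAt ℝ (deriv u) τ)
    (hueq : ∀ τ, deriv (deriv u) τ + (2 * tanh τ) • deriv u τ +
        (2 * (1 / cosh τ) ^ 2) • u τ - (3 : ℝ) • u τ = 0) :
    ∃ C D : E, ∀ τ, u τ =
      cosh τ • C + (sinh τ - (1 / 3) * sinh τ * tanh τ ^ 2) • D := by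
  have hu : IsLinearODESolution (fun τ => 2 * tanh τ) (fun τ => 2 * (1 / cosh τ) ^ 2 - 3) u :=
    ⟨hu1, hu2, fun τ => by rw [sub_smul, ← add_sub_assoc, hueq τ]⟩
  have hW (τ : ℝ) : wronskian cosh oddRadialMode τ ≠ 0 := by
    rw [wronskian_cosh_oddRadialMode]
    have := cosh_pos τ
    positivity
  exact isLinearODESolution_cosh.exists_eq_smul_add_smul isLinearODESolution_oddRadialMode hW hu

end RadialEquation

/-- Classification of the `n = 1`, `ℓ = 1` scalar harmonics on dS₃: any twice differentiable
solution of `u'' + 2 tanh τ · u' + 2 sech²τ · u - 3u = 0` on `ℝ` is of the form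
`u(τ) = C cosh τ + D (sinh τ - (1/3) sinh τ tanh²τ)`. -/
theorem stmt19 (u : ℝ → ℝ)
    (hu1 : ∀ τ, DifferentiableAt ℝ u τ)
    (hu2 : ∀ τ, DifferentiableAt ℝ (deriv u) τ)
    (hueq : ∀ τ, deriv (deriv u) τ + 2 * Real.tanh τ * deriv u τ +
        2 * (1 / Real.cosh τ) ^ 2 * u τ - 3 * u τ = 0) :
    ∃ C D : ℝ, ∀ τ, u τ =
      C * Real.cosh τ + D * (Real.sinh τ - (1 / 3) * Real.sinh τ * Real.tanh τ ^ 2) := by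
  obtain ⟨C, D, h⟩ := stmt19_general u hu1 hu2 hueq
  exact ⟨C, D, fun τ => by rw [h τ, smul_eq_mul, smul_eq_mul, mul_comm C, mul_comm D]⟩
end
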